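/- Let V₁ and V₂ be partial isometries on a complex Hilbert space H. Then the product V₁V₂ is a partial isometry if and only if the projections E = V₁*V₁ and F = V₂V₂* commute. -/

import Mathlib

open ContinuousLinearMap

/-- A bounded operator `V` on a Hilbert space is a partial isometry if it is isometric
on the orthogonal complement of its kernel. -/
def IsPartialIsometry {H : Type*} [NormedAddCommGroup H] [InnerProductSpace ℂ H]
    [CompleteSpace H] (V : H →L[ℂ] H) : Prop :=
  ∀ x ∈ (LinearMap.ker (V : H →ₗ[ℂ] H))ᗮ, ‖V x‖ = ‖x‖

/-!
An operator `V` is a partial isometry exactly when `V† V` fixes the orthogonal complement of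
`ker V`, which amounts to `V V† V = V`. For partial isometries `V` and `W`, put `P = V† V` and
`Q = W W†`. Multiplying `(V W) (V W)† (V W) = V W` by `V†` on the left and by `W†` on the right
gives `P Q P Q = P Q`, and multiplying this by `V` and `W` leads back. If `P Q` is idempotent then
`A = P Q - Q P Q` satisfies `A† A = 0`, so `P Q = Q P Q` is self-adjoint and `P` commutes with `Q`.
-/

theorem isIdempotentElem_mul_iff_commute {A : Type*} [NonUnitalNormedRing A] [StarRing A]
    [CStarRing A] {p q : A} (hp : IsStarProjection p) (hq : IsStarProjection q) :
    IsIdempotentElem (p * q) ↔ Commute p q := by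
  refine ⟨fun hpq ↦ ?_, fun h ↦ hp.isIdempotentElem.mul_of_commute h hq.isIdempotentElem⟩
  have star_mul_self_eq_zero : star (p * q - q * p * q) * (p * q - q * p * q) = 0 := by
    have hp' (x : A) : p * (p * x) = p * x := by rw [← mul_assoc, hp.isIdempotentElem.eq]
    have hq' (x : A) : q * (q * x) = q * x := by rw [← mul_assoc, hq.isIdempotentElem.eq]
    have hpq' : p * (q * (p * q)) = p * q := by rw [← mul_assoc, hpq.eq]
    simp only [star_sub, star_mul, hp.isSelfAdjoint.star_eq,
      hq.isSelfAdjoint.star_eq, sub_mul, mul_sub, mul_assoc, hp', hq', hpq', sub_self]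
  have mul_eq : p * q = q * p * q :=
    sub_eq_zero.mp ((CStarRing.star_mul_self_eq_zero_iff _).mp star_mul_self_eq_zero)
  have hqpq : IsSelfAdjoint (q * p * q) := by
    simpa only [hq.isSelfAdjoint.star_eq] using hp.isSelfAdjoint.conjugate q
  exact (hp.isSelfAdjoint.commute_iff hq.isSelfAdjoint).mpr (mul_eq ▸ hqpq)

section PartialIsometry

open scoped InnerProduct

variable {𝕜 E F G : Type*} [RCLike 𝕜]
  [NormedAddCommGroup E] [InnerProductSpace 𝕜 E]
  [NormedAddCommGroup F] [InnerProductSpace 𝕜 F]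
  [NormedAddCommGroup G] [InnerProductSpace 𝕜 G]

/-- Partial isometries between two possibly different real or complex inner product spaces: the
operators that are isometric on the orthogonal complement of their kernel. For endomorphisms of a
complex Hilbert space this is `IsPartialIsometry`. -/
def IsPartialIsometryBetween (V : E →L[𝕜] F) : Prop :=
  ∀ x ∈ V.kerᗮ, ‖V x‖ = ‖x‖

variable [CompleteSpace E]

theorem comp_starProjection_orthogonal_ker (V : E →L[𝕜] F) : V ∘L V.kerᗮ.starProjection = V := by
  ext x
  have : x - V.kerᗮ.starProjection x ∈ V.ker := by
    simpa only [Submodule.orthogonal_orthogonal] using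
      V.kerᗮ.sub_starProjection_mem_orthogonal x
  exact (sub_eq_zero.mp ((map_sub V _ _).symm.trans this)).symm

variable [CompleteSpace F]

theorem adjoint_apply_mem_orthogonal_ker (V : E →L[𝕜] F) (y : F) : (V†) y ∈ V.kerᗮ := by
  rw [V.orthogonal_ker]
  exact Submodule.le_topologicalClosure _ ⟨y, rfl⟩

theorem isPartialIsometryBetween_iff_adjoint_apply_apply {V : E →L[𝕜] F} :
    IsPartialIsometryBetween V ↔ ∀ x ∈ V.kerᗮ, (V†) (V x) = x := by
  set T := V ∘L V.kerᗮ.subtypeL with hT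
  have coe_adjoint_apply_apply (x : V.kerᗮ) : ((T†) (T x) : E) = (V†) (V x) := by
    rw [hT, adjoint_comp, Submodule.adjoint_subtypeL]
    exact Submodule.starProjection_eq_self_iff.mpr (adjoint_apply_mem_orthogonal_ker V (V x))
  calc IsPartialIsometryBetween V
      ↔ ∀ x : V.kerᗮ, ‖T x‖ = ‖x‖ :=
        ⟨fun h x ↦ h x x.2, fun h x hx ↦ h ⟨x, hx⟩⟩
    _ ↔ T† ∘L T = 1 := T.norm_map_iff_adjoint_comp_self
    _ ↔ ∀ x : V.kerᗮ, (V†) (V x) = x := by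
      simp only [ContinuousLinearMap.ext_iff, Subtype.ext_iff, comp_apply,
        coe_adjoint_apply_apply, one_apply_eq_self]
    _ ↔ ∀ x ∈ V.kerᗮ, (V†) (V x) = x := Subtype.forall

theorem isPartialIsometryBetween_iff_comp_adjoint_comp_self {V : E →L[𝕜] F} :
    IsPartialIsometryBetween V ↔ V ∘L V† ∘L V = V := by
  rw [isPartialIsometryBetween_iff_adjoint_apply_apply]
  constructor
  · intro h
    have adjoint_comp_starProjection :
        V† ∘L V ∘L V.kerᗮ.starProjection = V.kerᗮ.starProjection :=
      ext fun x ↦ h _ (V.kerᗮ.starProjection_apply_mem x)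
    calc V ∘L V† ∘L V
        = V ∘L V† ∘L V ∘L V.kerᗮ.starProjection := by rw [comp_starProjection_orthogonal_ker]
      _ = V := by rw [adjoint_comp_starProjection, comp_starProjection_orthogonal_ker]
  · intro h x hx
    have sub_mem_ker : (V†) (V x) - x ∈ V.ker :=
      LinearMap.sub_mem_ker_iff.mpr congr($h x)
    have sub_mem_orthogonal : (V†) (V x) - x ∈ V.kerᗮ :=
      sub_mem (adjoint_apply_mem_orthogonal_ker V (V x)) hx
    exact sub_eq_zero.mp <|
      Submodule.disjoint_def.mp V.ker.orthogonal_disjoint _ sub_mem_ker sub_mem_orthogonal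

namespace IsPartialIsometryBetween

variable [CompleteSpace G] {V : F →L[𝕜] G} {W : E →L[𝕜] F}

theorem adjoint (hW : IsPartialIsometryBetween W) : IsPartialIsometryBetween (W†) := by
  rw [isPartialIsometryBetween_iff_comp_adjoint_comp_self] at hW ⊢
  simpa only [adjoint_comp, adjoint_adjoint, comp_assoc] using congr(($hW)†)

theorem isStarProjection_adjoint_comp_self (hV : IsPartialIsometryBetween V) :
    IsStarProjection (V† ∘L V) where
  isIdempotentElem := congr(V† ∘L $(isPartialIsometryBetween_iff_comp_adjoint_comp_self.mp hV))
  isSelfAdjoint := by rw [isSelfAdjoint_iff', adjoint_comp, adjoint_adjoint]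

theorem isStarProjection_comp_adjoint (hW : IsPartialIsometryBetween W) :
    IsStarProjection (W ∘L W†) := by
  simpa only [adjoint_adjoint] using hW.adjoint.isStarProjection_adjoint_comp_self

theorem comp_iff_isIdempotentElem (hV : IsPartialIsometryBetween V)
    (hW : IsPartialIsometryBetween W) :
    IsPartialIsometryBetween (V ∘L W) ↔ IsIdempotentElem ((V† ∘L V) * (W ∘L W†)) := by
  rw [isPartialIsometryBetween_iff_comp_adjoint_comp_self] at hV hW ⊢
  rw [adjoint_comp]
  constructor
  · intro h
    exact congr(V† ∘L $h ∘L W†)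
  · intro h
    calc (V ∘L W) ∘L (W† ∘L V†) ∘L (V ∘L W)
        = (V ∘L V† ∘L V) ∘L W ∘L W† ∘L V† ∘L V ∘L (W ∘L W† ∘L W) := by rw [hV, hW]; rfl
      _ = V ∘L ((V† ∘L V) * (W ∘L W†) * ((V† ∘L V) * (W ∘L W†))) ∘L W := rfl
      _ = (V ∘L V† ∘L V) ∘L (W ∘L W† ∘L W) := by rw [h.eq]; rfl
      _ = V ∘L W := by rw [hV, hW]

end IsPartialIsometryBetween

theorem stmt_6_general [CompleteSpace G] {V : F →L[𝕜] G} {W : E →L[𝕜] F}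
    (hV : IsPartialIsometryBetween V) (hW : IsPartialIsometryBetween W) :
    IsPartialIsometryBetween (V ∘L W) ↔ Commute (V† ∘L V) (W ∘L W†) :=
  (hV.comp_iff_isIdempotentElem hW).trans <| isIdempotentElem_mul_iff_commute
    hV.isStarProjection_adjoint_comp_self hW.isStarProjection_comp_adjoint

end PartialIsometry

theorem stmt_6 {H : Type*} [NormedAddCommGroup H] [InnerProductSpace ℂ H] [CompleteSpace H]
    (V₁ V₂ : H →L[ℂ] H) (h₁ : IsPartialIsometry V₁) (h₂ : IsPartialIsometry V₂) :
    IsPartialIsometry (V₁ * V₂) ↔ Commute (adjoint V₁ * V₁) (V₂ * adjoint V₂) :=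
  stmt_6_general h₁ h₂
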